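/- arXiv:1404.3949 — 5 statements merged into one kernel-verified Lean document; each statement's English description precedes it below -/
import Mathlib

section
/- Let k ≥ 2 be an even integer and set n = (k^4 + 2k^3 + 6k^2 + 4k)/2. Let g₁ = 1, g₂ = (k^3 + 2k^2 + 6k + 2)/2, g₃ = (k^4 + 4k^2 - 8k)/4, g₄ = (k^4 + 4k^2 - 4k)/4, viewed as elements of ℤ/nℤ. Then for every x ∈ ℤ/nℤ there exist integers c₁, c₂, c₃, c₄ with |c₁| + |c₂| + |c₃| + |c₄| ≤ k and x = c₁·g₁ + c₂·g₂ + c₃·g₃ + c₄·g₄. (Equivalently, the undirected circulant graph on ℤ/nℤ with connection set {±g₁, ±g₂, ±g₃, ±g₄} has diameter at most k.) -/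
/-!
Write `k = 2a`. The relations between the generators form a lattice in `ℤ⁴` containing the rows
`A₀, …, A₃` of a matrix `D + K`, with `D = diag (2a, 2a, 2a + 1, 2a + 1)` and `K` skew-symmetric
with entries in `{-1, 0, 1}`, and also half the sum of these rows. Hence it contains the sixteen
vertices `v_ε = ½ ∑ εᵢ Aᵢ`, `ε ∈ {±1}⁴`, of the parallelepiped spanned by the `Aᵢ` and centred at
the origin. As `K` is skew, its contributions to `‖v_ε‖₁` cancel, and `‖v_ε‖₁` is half the trace
of `D`, namely `4a + 1`.

Let `x` have least `ℓ¹` norm in its coset. If its coordinates are nonzero with signs `ε`, then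
`‖x‖₁ ≤ ‖x - εᵢ Aᵢ‖₁` bounds `|xᵢ|` by exactly the `i`-th coordinate of `εᵢ v_ε`, again because
`K` is skew. So `x` lies in the box with opposite corners `0` and `v_ε`, where
`‖x‖₁ ≤ ‖x - v_ε‖₁ = ‖v_ε‖₁ - ‖x‖₁`, and therefore `‖x‖₁ ≤ ⌊(4a + 1) / 2⌋ = 2a`.
A vanishing coordinate has no sign of its own; a sign for it must be chosen so that `x` still lies
in the box, and differences with sums `Aᵢ ± Aⱼ` rule out the points with no valid choice.
-/

open Matrix

section L1Reduced

variable {ι : Type*} [Fintype ι]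

/-- The `ℓ¹` norm of an integer vector, as a natural number. -/
def l1Norm (x : ι → ℤ) : ℕ := ∑ i, (x i).natAbs

/-- `x` has the least `ℓ¹` norm in its coset modulo `L`, i.e. it lies in the `ℓ¹` Voronoi cell
of `L` around the origin. -/
def IsL1Reduced (L : Submodule ℤ (ι → ℤ)) (x : ι → ℤ) : Prop :=
  ∀ v ∈ L, l1Norm x ≤ l1Norm (x - v)

theorem l1Norm_neg (x : ι → ℤ) : l1Norm (-x) = l1Norm x := by
  simp only [l1Norm, Pi.neg_apply, Int.natAbs_neg]

theorem l1Norm_sub_add_l1Norm_of_mem_uIcc {x v : ι → ℤ} (h : ∀ i, x i ∈ Set.uIcc 0 (v i)) :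
    l1Norm (x - v) + l1Norm x = l1Norm v := by
  simp only [l1Norm, ← Finset.sum_add_distrib, Pi.sub_apply]
  refine Finset.sum_congr rfl fun i _ ↦ ?_
  have := Set.mem_uIcc.mp (h i)
  omega

theorem exists_isL1Reduced (L : Submodule ℤ (ι → ℤ)) (x : ι → ℤ) :
    ∃ y, x - y ∈ L ∧ IsL1Reduced L y := by
  obtain ⟨y, hy, hmin⟩ :=
    exists_minimalFor_of_wellFoundedLT (fun y ↦ x - y ∈ L) l1Norm ⟨x, by simp⟩
  refine ⟨y, hy, fun v hv ↦ ?_⟩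
  have hyv : x - (y - v) ∈ L := by
    simpa only [sub_sub_eq_add_sub, add_sub_right_comm] using L.add_mem hy hv
  exact (le_total _ _).elim id (hmin hyv)

theorem exists_apply_eq_and_l1Norm_le {M : Type*} [AddCommGroup M] {φ : (ι → ℤ) →ₗ[ℤ] M}
    (hφ : Function.Surjective φ) {k : ℕ}
    (h : ∀ x, IsL1Reduced (LinearMap.ker φ) x → l1Norm x ≤ k) (y : M) :
    ∃ c, φ c = y ∧ l1Norm c ≤ k := by
  obtain ⟨x, rfl⟩ := hφ y
  obtain ⟨c, hc, hred⟩ := exists_isL1Reduced (LinearMap.ker φ) x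
  exact ⟨c, (LinearMap.sub_mem_ker_iff.mp hc).symm, h c hred⟩

namespace IsL1Reduced

variable {L L' : Submodule ℤ (ι → ℤ)} {x v : ι → ℤ}

theorem anti (hL : L ≤ L') (hx : IsL1Reduced L' x) : IsL1Reduced L x :=
  fun v hv ↦ hx v (hL hv)

theorem neg (hx : IsL1Reduced L x) : IsL1Reduced L (-x) := fun v hv ↦ by
  have h := hx (-v) (L.neg_mem hv)
  rwa [← l1Norm_neg x, ← l1Norm_neg (x - -v), neg_sub', neg_neg] at h

theorem two_mul_l1Norm_le (hx : IsL1Reduced L x) (hv : v ∈ L)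
    (hxv : ∀ i, x i ∈ Set.uIcc 0 (v i)) : 2 * l1Norm x ≤ l1Norm v := by
  have := hx v hv
  have := l1Norm_sub_add_l1Norm_of_mem_uIcc hxv
  omega

end IsL1Reduced

end L1Reduced

section RelationLattice

variable {a x₀ x₁ x₂ x₃ : ℤ}

/-- Relations between the four generators. The first four rows form `D + K` with `D` diagonal
and `K` skew-symmetric; the last row is half their sum. -/
def relationMatrix (a : ℤ) : Matrix (Fin 5) (Fin 4) ℤ :=
  !![2 * a, 0, 1, -1;
     0, 2 * a, -1, 1;
     -1, 1, 2 * a + 1, 1;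
     1, -1, -1, 2 * a + 1;
     a, a, a, a + 1]

/-- The lattice spanned by the rows of `relationMatrix a`. -/
def relationLattice (a : ℤ) : Submodule ℤ (Fin 4 → ℤ) :=
  LinearMap.range (relationMatrix a).vecMulLinear

theorem vecMul_relationMatrix (a c₀ c₁ c₂ c₃ c₄ : ℤ) :
    ![c₀, c₁, c₂, c₃, c₄] ᵥ* relationMatrix a =
      ![2 * a * c₀ - c₂ + c₃ + a * c₄, 2 * a * c₁ + c₂ - c₃ + a * c₄,
        (2 * a + 1) * c₂ + c₀ - c₁ - c₃ + a * c₄,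
        (2 * a + 1) * c₃ - c₀ + c₁ + c₂ + (a + 1) * c₄] := by
  ext i
  fin_cases i <;> simp [relationMatrix, vecMul, dotProduct, Fin.sum_univ_succ] <;> ring

theorem mem_relationLattice_iff {v : Fin 4 → ℤ} : v ∈ relationLattice a ↔
    ∃ c₀ c₁ c₂ c₃ c₄, ![c₀, c₁, c₂, c₃, c₄] ᵥ* relationMatrix a = v := by
  constructor
  · rintro ⟨c, rfl⟩
    exact ⟨c 0, c 1, c 2, c 3, c 4, congrArg (· ᵥ* _) (FinVec.etaExpand_eq c)⟩
  · rintro ⟨c₀, c₁, c₂, c₃, c₄, rfl⟩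
    exact ⟨_, rfl⟩

-- The symmetry is multiplication by the second generator, whose square is `1` modulo `n`.
theorem swap_mem_relationLattice (hx : ![x₀, x₁, x₂, x₃] ∈ relationLattice a) :
    ![x₁, x₀, -x₂, -x₃] ∈ relationLattice a := by
  obtain ⟨c₀, c₁, c₂, c₃, c₄, h⟩ := mem_relationLattice_iff.mp hx
  simp only [vecMul_relationMatrix, vecCons_inj, and_true] at h
  obtain ⟨rfl, rfl, rfl, rfl⟩ := h
  refine mem_relationLattice_iff.mpr ⟨c₁, c₀, -c₂ - c₄, -c₃ - c₄, c₄, ?_⟩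
  simp only [vecMul_relationMatrix, vecCons_inj, and_true]
  exact ⟨by ring, by ring, by ring, by ring⟩

theorem l1Norm_vec4 (x₀ x₁ x₂ x₃ : ℤ) :
    l1Norm ![x₀, x₁, x₂, x₃] = x₀.natAbs + x₁.natAbs + x₂.natAbs + x₃.natAbs := by
  simp [l1Norm, Fin.sum_univ_four]

/-- The combination of the first four rows of `relationMatrix a` with coefficients `eᵢ`, minus the
last row. For `eᵢ ∈ {0, 1}` these are the vertices of the parallelepiped spanned by the first four
rows and centred at the origin; `eᵢ = 1` and `eᵢ = 0` stand for the signs `+` and `-`. -/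
def parallelepipedVertex (a e₀ e₁ e₂ e₃ : ℤ) : Fin 4 → ℤ :=
  ![e₀, e₁, e₂, e₃, -1] ᵥ* relationMatrix a

theorem parallelepipedVertex_mem (a e₀ e₁ e₂ e₃ : ℤ) :
    parallelepipedVertex a e₀ e₁ e₂ e₃ ∈ relationLattice a :=
  ⟨_, rfl⟩

theorem l1Norm_parallelepipedVertex {e₀ e₁ e₂ e₃ : ℤ} (ha : 1 ≤ a) (h₀ : e₀ = 0 ∨ e₀ = 1)
    (h₁ : e₁ = 0 ∨ e₁ = 1) (h₂ : e₂ = 0 ∨ e₂ = 1) (h₃ : e₃ = 0 ∨ e₃ = 1) :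
    l1Norm (parallelepipedVertex a e₀ e₁ e₂ e₃) = 4 * a + 1 := by
  rw [parallelepipedVertex, vecMul_relationMatrix, l1Norm_vec4]
  rcases h₀ with rfl | rfl <;> rcases h₁ with rfl | rfl <;> rcases h₂ with rfl | rfl <;>
    rcases h₃ with rfl | rfl <;> omega

namespace IsL1Reduced

theorem natAbs_le_sub (hx : IsL1Reduced (relationLattice a) ![x₀, x₁, x₂, x₃])
    (c₀ c₁ c₂ c₃ c₄ : ℤ) :
    x₀.natAbs + x₁.natAbs + x₂.natAbs + x₃.natAbs ≤
      (x₀ - (2 * a * c₀ - c₂ + c₃ + a * c₄)).natAbs +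
      (x₁ - (2 * a * c₁ + c₂ - c₃ + a * c₄)).natAbs +
      (x₂ - ((2 * a + 1) * c₂ + c₀ - c₁ - c₃ + a * c₄)).natAbs +
      (x₃ - ((2 * a + 1) * c₃ - c₀ + c₁ + c₂ + (a + 1) * c₄)).natAbs := by
  have h := hx _ (mem_relationLattice_iff.mpr ⟨c₀, c₁, c₂, c₃, c₄, rfl⟩)
  simpa [vecMul_relationMatrix, l1Norm_vec4] using h

theorem neg_vec (hx : IsL1Reduced (relationLattice a) ![x₀, x₁, x₂, x₃]) :
    IsL1Reduced (relationLattice a) ![-x₀, -x₁, -x₂, -x₃] := by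
  simpa using hx.neg

theorem swap (hx : IsL1Reduced (relationLattice a) ![x₀, x₁, x₂, x₃]) :
    IsL1Reduced (relationLattice a) ![x₁, x₀, -x₂, -x₃] := by
  intro v hv
  obtain ⟨v₀, v₁, v₂, v₃, rfl⟩ : ∃ v₀ v₁ v₂ v₃, v = ![v₀, v₁, v₂, v₃] :=
    ⟨_, _, _, _, (FinVec.etaExpand_eq v).symm⟩
  have h := hx _ (swap_mem_relationLattice hv)
  simp only [cons_sub_cons, empty_sub_empty, l1Norm_vec4] at h ⊢
  omega

section Bounds

variable (ha : 1 ≤ a) (hx : IsL1Reduced (relationLattice a) ![x₀, x₁, x₂, x₃])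
include ha hx

-- Subtracting the first row alone rules out `2 * a < x₀` unless `a = 1`.
theorem coord₀_le_two_mul : x₀ ≤ 2 * a := by
  have h₁ := hx.natAbs_le_sub 1 0 0 0 0
  have h₂ := hx.natAbs_le_sub 2 1 0 1 (-1)
  omega

-- For `0 ≤ x₀ ≤ 2 * a`, subtracting the first row `(2a, 0, 1, -1)` changes `|x₀|` by
-- `2 * (a - x₀)`, and `|x₂|`, `|x₃|` by `±1` according to their signs; the sum of the changes must
-- be nonnegative. The other rows are treated in the same way.
theorem coord₀_le :
    x₀ ≤ a - 1 + (if x₂ ≤ 0 then 1 else 0) + (if 0 ≤ x₃ then 1 else 0) := by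
  have h := hx.natAbs_le_sub 1 0 0 0 0
  have := hx.coord₀_le_two_mul ha
  omega

theorem coord₀_bounds :
    -(a - 1 + (if 0 ≤ x₂ then 1 else 0) + (if x₃ ≤ 0 then 1 else 0)) ≤ x₀ ∧
      x₀ ≤ a - 1 + (if x₂ ≤ 0 then 1 else 0) + (if 0 ≤ x₃ then 1 else 0) := by
  have := hx.neg_vec.coord₀_le ha
  exact ⟨by omega, hx.coord₀_le ha⟩

theorem coord₁_bounds :
    -(a - 1 + (if x₂ ≤ 0 then 1 else 0) + (if 0 ≤ x₃ then 1 else 0)) ≤ x₁ ∧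
      x₁ ≤ a - 1 + (if 0 ≤ x₂ then 1 else 0) + (if x₃ ≤ 0 then 1 else 0) := by
  have := hx.swap.coord₀_bounds ha
  omega

theorem coord₂_le_two_mul_add_one : x₂ ≤ 2 * a + 1 := by
  have h := hx.natAbs_le_sub 1 0 1 0 0
  omega

theorem coord₂_le :
    x₂ ≤ a - 1 + (if 0 ≤ x₀ then 1 else 0) + (if x₁ ≤ 0 then 1 else 0) +
      (if x₃ ≤ 0 then 1 else 0) := by
  have h := hx.natAbs_le_sub 0 0 1 0 0
  have := hx.coord₂_le_two_mul_add_one ha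
  omega

theorem coord₃_le_two_mul_add_one : x₃ ≤ 2 * a + 1 := by
  have h := hx.natAbs_le_sub 0 0 1 1 0
  omega

theorem coord₃_le :
    x₃ ≤ a - 1 + (if x₀ ≤ 0 then 1 else 0) + (if 0 ≤ x₁ then 1 else 0) +
      (if 0 ≤ x₂ then 1 else 0) := by
  have h := hx.natAbs_le_sub 0 0 0 1 0
  have := hx.coord₃_le_two_mul_add_one ha
  omega

theorem coord₀_add_coord₁_le : x₀ + x₁ ≤ 2 * a := by
  have h := hx.natAbs_le_sub 1 1 0 0 0
  have h₀ := hx.coord₀_le ha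
  have h₁ := hx.coord₁_bounds ha
  omega

theorem natAbs_coord₀_add_coord₁_le : (x₀ + x₁).natAbs ≤ 2 * a := by
  have := hx.coord₀_add_coord₁_le ha
  have := hx.neg_vec.coord₀_add_coord₁_le ha
  omega

theorem coord₀_add_coord₂_le : x₀ + x₂ ≤ 2 * a + (if x₁ ≤ 0 then 1 else 0) := by
  have h := hx.natAbs_le_sub 1 0 1 0 0
  have h₀ := hx.coord₀_le ha
  have h₂ := hx.coord₂_le ha
  omega

theorem coord₀_add_coord₃_le : x₀ + x₃ ≤ 2 * a + (if 0 ≤ x₁ then 1 else 0) := by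
  have h := hx.natAbs_le_sub 1 0 0 1 0
  have h₀ := hx.coord₀_le ha
  have h₃ := hx.coord₃_le ha
  omega

theorem coord₂_add_coord₃_le : x₂ + x₃ ≤ 2 * a + 1 := by
  have h := hx.natAbs_le_sub 0 0 1 1 0
  have h₂ := hx.coord₂_le ha
  have h₃ := hx.coord₃_le ha
  omega

-- The hypotheses say that `![x₀, x₁, x₂, x₃]` lies in the box with opposite corners `0` and
-- `parallelepipedVertex a e₀ e₁ e₂ e₃`.
theorem l1Norm_le_of_mem_box {e₀ e₁ e₂ e₃ : ℤ}
    (h₀ : e₀ = 0 ∧ -a - e₂ + e₃ ≤ x₀ ∧ x₀ ≤ 0 ∨ e₀ = 1 ∧ 0 ≤ x₀ ∧ x₀ ≤ a - e₂ + e₃)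
    (h₁ : e₁ = 0 ∧ -a + e₂ - e₃ ≤ x₁ ∧ x₁ ≤ 0 ∨ e₁ = 1 ∧ 0 ≤ x₁ ∧ x₁ ≤ a + e₂ - e₃)
    (h₂ : e₂ = 0 ∧ -a + e₀ - e₁ - e₃ ≤ x₂ ∧ x₂ ≤ 0 ∨
      e₂ = 1 ∧ 0 ≤ x₂ ∧ x₂ ≤ a + 1 + e₀ - e₁ - e₃)
    (h₃ : e₃ = 0 ∧ -a - 1 - e₀ + e₁ + e₂ ≤ x₃ ∧ x₃ ≤ 0 ∨
      e₃ = 1 ∧ 0 ≤ x₃ ∧ x₃ ≤ a - e₀ + e₁ + e₂) :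
    l1Norm ![x₀, x₁, x₂, x₃] ≤ 2 * a := by
  have hnorm := l1Norm_parallelepipedVertex ha (h₀.imp And.left And.left)
    (h₁.imp And.left And.left) (h₂.imp And.left And.left) (h₃.imp And.left And.left)
  have hbox : ∀ i, ![x₀, x₁, x₂, x₃] i ∈ Set.uIcc 0 (parallelepipedVertex a e₀ e₁ e₂ e₃ i) := by
    simp only [parallelepipedVertex, vecMul_relationMatrix, Fin.forall_fin_succ, Set.mem_uIcc,
      cons_val_zero, cons_val_succ, IsEmpty.forall_iff, and_true]
    refine ⟨?_, ?_, ?_, ?_⟩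
    · rcases h₀ with ⟨rfl, h⟩ | ⟨rfl, h⟩ <;> omega
    · rcases h₁ with ⟨rfl, h⟩ | ⟨rfl, h⟩ <;> omega
    · rcases h₂ with ⟨rfl, h⟩ | ⟨rfl, h⟩ <;> omega
    · rcases h₃ with ⟨rfl, h⟩ | ⟨rfl, h⟩ <;> omega
  have := hx.two_mul_l1Norm_le (parallelepipedVertex_mem a e₀ e₁ e₂ e₃) hbox
  omega

theorem l1Norm_le_of_pos_of_neg (h₂ : 0 < x₂) (h₃ : x₃ < 0) :
    l1Norm ![x₀, x₁, x₂, x₃] ≤ 2 * a := by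
  have := hx.coord₀_bounds ha
  have := hx.coord₁_bounds ha
  have := hx.coord₂_le ha
  have := hx.neg_vec.coord₃_le ha
  refine hx.l1Norm_le_of_mem_box ha (e₀ := if 0 ≤ x₀ then 1 else 0)
    (e₁ := if 0 < x₁ then 1 else 0) (e₂ := 1) (e₃ := 0) ?_ ?_ ?_ ?_ <;> omega

-- The box constrains `x₂` and `x₃` by `x₂ - a ≤ e₀ - e₁ ≤ a + 1 - x₃`, so a sign for a vanishing
-- `x₀` or `x₁` is chosen to bring `e₀ - e₁` into this interval.
theorem l1Norm_le_of_pos_of_pos (h₂ : 0 < x₂) (h₃ : 0 < x₃) :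
    l1Norm ![x₀, x₁, x₂, x₃] ≤ 2 * a := by
  have := hx.coord₀_bounds ha
  have := hx.coord₁_bounds ha
  have := hx.coord₂_le ha
  have := hx.coord₃_le ha
  have := hx.coord₂_add_coord₃_le ha
  obtain ⟨e₁, he₁⟩ : ∃ e₁ : ℤ, e₁ =
    if 0 < x₁ ∨ x₁ = 0 ∧ x₂ < a + (if 0 ≤ x₀ then 1 else 0) then 1 else 0 := ⟨_, rfl⟩
  refine hx.l1Norm_le_of_mem_box ha (e₀ := if 0 < x₀ ∨ x₀ = 0 ∧ a < x₂ + e₁ then 1 else 0)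
    (e₁ := e₁) (e₂ := 1) (e₃ := 1) ?_ ?_ ?_ ?_ <;> omega

-- The sign of `x₂` is free, but the box only reaches out to `x₀ = a + 1` or `x₁ = -(a + 1)`
-- if that sign is negative.
theorem l1Norm_le_of_zero_of_pos (h₂ : x₂ = 0) (h₃ : 0 < x₃) :
    l1Norm ![x₀, x₁, x₂, x₃] ≤ 2 * a := by
  have := hx.coord₀_bounds ha
  have := hx.coord₁_bounds ha
  have := hx.coord₃_le ha
  have := hx.natAbs_coord₀_add_coord₁_le ha
  have := hx.coord₀_add_coord₃_le ha
  have := hx.swap.neg_vec.coord₀_add_coord₃_le ha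
  refine hx.l1Norm_le_of_mem_box ha (e₀ := if 0 < x₀ then 1 else 0)
    (e₁ := if 0 ≤ x₁ then 1 else 0) (e₂ := if x₀ = a + 1 ∨ x₁ = -(a + 1) then 0 else 1)
    (e₃ := 1) ?_ ?_ ?_ ?_ <;> omega

theorem l1Norm_le_of_pos_of_zero (h₂ : 0 < x₂) (h₃ : x₃ = 0) :
    l1Norm ![x₀, x₁, x₂, x₃] ≤ 2 * a := by
  have := hx.coord₀_bounds ha
  have := hx.coord₁_bounds ha
  have := hx.coord₂_le ha
  have := hx.natAbs_coord₀_add_coord₁_le ha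
  have := hx.coord₀_add_coord₂_le ha
  have := hx.swap.neg_vec.coord₀_add_coord₂_le ha
  refine hx.l1Norm_le_of_mem_box ha (e₀ := if 0 ≤ x₀ then 1 else 0)
    (e₁ := if 0 < x₁ then 1 else 0) (e₂ := 1)
    (e₃ := if x₀ = a ∨ x₁ = -a then 1 else 0) ?_ ?_ ?_ ?_ <;> omega

theorem l1Norm_le_of_zero_of_zero (h₂ : x₂ = 0) (h₃ : x₃ = 0) :
    l1Norm ![x₀, x₁, x₂, x₃] ≤ 2 * a := by
  have := hx.coord₀_bounds ha
  have := hx.coord₁_bounds ha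
  have := hx.natAbs_coord₀_add_coord₁_le ha
  refine hx.l1Norm_le_of_mem_box ha (e₀ := if 0 ≤ x₀ then 1 else 0)
    (e₁ := if 0 ≤ x₁ then 1 else 0)
    (e₂ := if x₀ = -(a + 1) ∨ x₁ = a + 1 then 1 else 0)
    (e₃ := if x₀ = a + 1 ∨ x₁ = -(a + 1) then 1 else 0) ?_ ?_ ?_ ?_ <;> omega

end Bounds

theorem l1Norm_le (ha : 1 ≤ a) {x : Fin 4 → ℤ} (hx : IsL1Reduced (relationLattice a) x) :
    l1Norm x ≤ 2 * a := by
  obtain ⟨x₀, x₁, x₂, x₃, rfl⟩ : ∃ x₀ x₁ x₂ x₃, x = ![x₀, x₁, x₂, x₃] :=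
    ⟨_, _, _, _, (FinVec.etaExpand_eq x).symm⟩
  have hneg : l1Norm ![-x₀, -x₁, -x₂, -x₃] = l1Norm ![x₀, x₁, x₂, x₃] := by
    simpa using l1Norm_neg ![x₀, x₁, x₂, x₃]
  rcases lt_trichotomy x₂ 0 with h₂ | h₂ | h₂ <;> rcases lt_trichotomy x₃ 0 with h₃ | h₃ | h₃
  · exact hneg ▸ hx.neg_vec.l1Norm_le_of_pos_of_pos ha (by omega) (by omega)
  · exact hneg ▸ hx.neg_vec.l1Norm_le_of_pos_of_zero ha (by omega) (by omega)
  · exact hneg ▸ hx.neg_vec.l1Norm_le_of_pos_of_neg ha (by omega) (by omega)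
  · exact hneg ▸ hx.neg_vec.l1Norm_le_of_zero_of_pos ha (by omega) (by omega)
  · exact hx.l1Norm_le_of_zero_of_zero ha h₂ h₃
  · exact hx.l1Norm_le_of_zero_of_pos ha h₂ h₃
  · exact hx.l1Norm_le_of_pos_of_neg ha h₂ h₃
  · exact hx.l1Norm_le_of_pos_of_zero ha h₂ h₃
  · exact hx.l1Norm_le_of_pos_of_pos ha h₂ h₃

end IsL1Reduced

end RelationLattice

section Generators

theorem range_vecMulLinear_le_ker_linearCombination {m ι : Type*} [Fintype m] [Fintype ι] {n : ℕ}
    {A : Matrix m ι ℤ} {g : ι → ℤ} {w : m → ℤ} (h : A *ᵥ g = (n : ℤ) • w) :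
    LinearMap.range A.vecMulLinear ≤
      LinearMap.ker (Fintype.linearCombination ℤ fun i ↦ (g i : ZMod n)) := by
  rintro _ ⟨c, rfl⟩
  have hc : c ᵥ* A ⬝ᵥ g = n * (c ⬝ᵥ w) := by
    rw [← dotProduct_mulVec, h, dotProduct_smul, smul_eq_mul]
  calc Fintype.linearCombination ℤ (fun i ↦ (g i : ZMod n)) (c ᵥ* A)
      = ((c ᵥ* A ⬝ᵥ g : ℤ) : ZMod n) := by
        simp [Fintype.linearCombination_apply, dotProduct]
    _ = 0 := by simp [hc]

/-- The generators `g₁, g₂, g₃, g₄` for `k = 2 * a`, as integers. -/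
def generators (a : ℤ) : Fin 4 → ℤ :=
  ![1, 4 * a ^ 3 + 4 * a ^ 2 + 6 * a + 1, 4 * a ^ 4 + 4 * a ^ 2 - 4 * a,
    4 * a ^ 4 + 4 * a ^ 2 - 2 * a]

theorem relationMatrix_mulVec_generators (a : ℤ) :
    relationMatrix a *ᵥ generators a =
      (8 * a ^ 4 + 8 * a ^ 3 + 12 * a ^ 2 + 4 * a) • ![0, 1, a, a - 1, a] := by
  ext i
  fin_cases i <;>
    simp [relationMatrix, generators, mulVec, dotProduct, Fin.sum_univ_four] <;> ring

theorem exists_linearCombination_generators_eq {a : ℤ} (ha : 1 ≤ a) {k n : ℕ}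
    (hk : (k : ℤ) = 2 * a) (hn : (n : ℤ) = 8 * a ^ 4 + 8 * a ^ 3 + 12 * a ^ 2 + 4 * a)
    (y : ZMod n) :
    ∃ c, Fintype.linearCombination ℤ (fun i ↦ (generators a i : ZMod n)) c = y ∧
      l1Norm c ≤ k := by
  refine exists_apply_eq_and_l1Norm_le (fun z ↦ ?_) (fun x hx ↦ ?_) y
  · obtain ⟨m, rfl⟩ := ZMod.intCast_surjective z
    exact ⟨Pi.single 0 m, by simp [generators]⟩
  · have hker := range_vecMulLinear_le_ker_linearCombination
      (hn ▸ relationMatrix_mulVec_generators a)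
    exact_mod_cast hk ▸ (hx.anti hker).l1Norm_le ha

end Generators

/-- The circulant graph on `ℤ/nℤ`, `n = (k⁴ + 2k³ + 6k² + 4k)/2` for even `k ≥ 2`,
with connection set `{±1, ±(k³+2k²+6k+2)/2, ±(k⁴+4k²-8k)/4, ±(k⁴+4k²-4k)/4}`,
has diameter at most `k`: every element of `ℤ/nℤ` is an integer combination
`c₁g₁ + c₂g₂ + c₃g₃ + c₄g₄` with `|c₁| + |c₂| + |c₃| + |c₄| ≤ k`. -/
theorem circulant_deg8_diameter_even (k : ℕ) (hk : 2 ≤ k) (hke : Even k)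
    (n : ℕ) (hn : n = (k ^ 4 + 2 * k ^ 3 + 6 * k ^ 2 + 4 * k) / 2)
    (g₁ g₂ g₃ g₄ : ZMod n)
    (hg₁ : g₁ = 1)
    (hg₂ : g₂ = ((((k : ℤ) ^ 3 + 2 * k ^ 2 + 6 * k + 2) / 2 : ℤ) : ZMod n))
    (hg₃ : g₃ = ((((k : ℤ) ^ 4 + 4 * k ^ 2 - 8 * k) / 4 : ℤ) : ZMod n))
    (hg₄ : g₄ = ((((k : ℤ) ^ 4 + 4 * k ^ 2 - 4 * k) / 4 : ℤ) : ZMod n)) :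
    ∀ x : ZMod n, ∃ c₁ c₂ c₃ c₄ : ℤ,
      |c₁| + |c₂| + |c₃| + |c₄| ≤ (k : ℤ) ∧
      x = c₁ • g₁ + c₂ • g₂ + c₃ • g₃ + c₄ • g₄ := by
  obtain ⟨b, hb⟩ := hke
  have hk₂ : (k : ℤ) = 2 * b := by omega
  have hn₂ : (n : ℤ) = 8 * b ^ 4 + 8 * b ^ 3 + 12 * b ^ 2 + 4 * b := by
    rw [hn]
    push_cast
    rw [hk₂]
    exact Int.ediv_eq_of_eq_mul_right two_ne_zero (by ring)
  have h₂ : ((k : ℤ) ^ 3 + 2 * k ^ 2 + 6 * k + 2) / 2 = generators b 1 := by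
    rw [hk₂]; exact Int.ediv_eq_of_eq_mul_right two_ne_zero (by simp [generators]; ring)
  have h₃ : ((k : ℤ) ^ 4 + 4 * k ^ 2 - 8 * k) / 4 = generators b 2 := by
    rw [hk₂]; exact Int.ediv_eq_of_eq_mul_right four_ne_zero (by simp [generators]; ring)
  have h₄ : ((k : ℤ) ^ 4 + 4 * k ^ 2 - 4 * k) / 4 = generators b 3 := by
    rw [hk₂]; exact Int.ediv_eq_of_eq_mul_right four_ne_zero (by simp [generators]; ring)
  intro x
  obtain ⟨c, rfl, hle⟩ := exists_linearCombination_generators_eq (by omega) hk₂ hn₂ x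
  refine ⟨c 0, c 1, c 2, c 3, ?_, ?_⟩
  · rw [l1Norm, Fin.sum_univ_four] at hle
    zify at hle
    exact hle
  · have h₁ : generators b 0 = 1 := rfl
    rw [hg₁, hg₂, hg₃, hg₄, h₂, h₃, h₄, Fintype.linearCombination_apply, Fin.sum_univ_four, h₁,
      Int.cast_one]
end

section
/- Let a ≥ 1 be an integer and let L ⊆ ℤ⁴ be the ℤ-span of v₁ = (-a-1, a+1, a, -a+1), v₂ = (a-1, a+1, a+1, -a), v₃ = (-a-1, -a+1, a+1, -a), v₄ = (-a, -a, a, a+1). Then the vectors (4a³+4a²+6a+1, -1, 0, 0), (4a⁴+4a²-4a, 0, -1, 0), and (4a⁴+4a²-2a, 0, 0, -1) all lie in L; consequently, in the quotient group ℤ⁴/L one has e₂ = (4a³+4a²+6a+1)·e₁, e₃ = (4a⁴+4a²-4a)·e₁, e₄ = (4a⁴+4a²-2a)·e₁, so ℤ⁴/L is cyclic generated by the class of e₁. -/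
/-!
The paper gives explicit coefficients that write `c • e₁ - eᵢ`, for `i = 2, 3, 4` and suitable `c`,
as a combination of `v₁, v₂, v₃, v₄`; modulo `L` each `eᵢ` is therefore a multiple of `e₁`. These
combinations are polynomial identities in `a` with integer coefficients, so they hold over any
commutative ring.
-/

open Submodule

section Module

variable {R M N : Type*}

lemma mem_span_quadruple [Semiring R] [AddCommMonoid M] [Module R M] {v w x y z : M} :
    v ∈ span R {w, x, y, z} ↔ ∃ p q r s : R, p • w + q • x + r • y + s • z = v := by
  simp [mem_span_insert (s := {x, y, z}), mem_span_triple, add_assoc, eq_comm]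

lemma quotient_mk_eq_smul_mk_iff [Ring R] [AddCommGroup M] [Module R M] {L : Submodule R M}
    {c : R} {x y : M} :
    (Submodule.Quotient.mk y : M ⧸ L) = c • Submodule.Quotient.mk x ↔ c • x - y ∈ L := by
  rw [eq_comm, ← Submodule.Quotient.mk_smul, Submodule.Quotient.eq]

lemma span_singleton_eq_top_of_surjective [Semiring R] [AddCommMonoid M] [Module R M]
    [AddCommMonoid N] [Module R N] {f : M →ₗ[R] N} (hf : Function.Surjective f) {s : Set M}
    (hs : span R s = ⊤) {x : N} (hx : ∀ y ∈ s, f y ∈ span R {x}) : span R {x} = ⊤ := by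
  rw [eq_top_iff, ← LinearMap.range_eq_top.2 hf, ← Submodule.map_top, ← hs]
  exact (map_span_le f s _).2 hx

end Module

section CommRing

variable {R : Type*} [CommRing R]

/-- The paper's lattice `L_k` for even `k = 2 * a`, spanned by `v₁, v₂, v₃, v₄`, with an arbitrary
commutative ring in place of `ℤ`. -/
def evenLattice (a : R) : Submodule R (Fin 4 → R) :=
  span R {![-a - 1, a + 1, a, -a + 1], ![a - 1, a + 1, a + 1, -a],
    ![-a - 1, -a + 1, a + 1, -a], ![-a, -a, a, a + 1]}

namespace evenLattice

lemma relation_e₂_mem (a : R) :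
    ![4 * a ^ 3 + 4 * a ^ 2 + 6 * a + 1, -1, 0, 0] ∈ evenLattice a := by
  refine mem_span_quadruple.2
    ⟨-(2 * a ^ 2 + 2 * a + 1), 2 * a ^ 2 + a + 2, -(a + 2), 1, ?_⟩
  ext i
  fin_cases i <;> simp <;> ring

lemma relation_e₃_mem (a : R) :
    ![4 * a ^ 4 + 4 * a ^ 2 - 4 * a, 0, -1, 0] ∈ evenLattice a := by
  refine mem_span_quadruple.2
    ⟨-(2 * a ^ 3 - 1), 2 * a ^ 3 - a ^ 2 + 2 * a - 2, -(a ^ 2 + a - 1), a - 1, ?_⟩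
  ext i
  fin_cases i <;> simp <;> ring

lemma relation_e₄_mem (a : R) :
    ![4 * a ^ 4 + 4 * a ^ 2 - 2 * a, 0, 0, -1] ∈ evenLattice a := by
  refine mem_span_quadruple.2
    ⟨-(2 * a ^ 3), 2 * a ^ 3 - a ^ 2 + 2 * a - 1, -(a ^ 2 + a - 1), a - 1, ?_⟩
  ext i
  fin_cases i <;> simp <;> ring

lemma mk_e₂ (a : R) : (Submodule.Quotient.mk ![0, 1, 0, 0] : (Fin 4 → R) ⧸ evenLattice a) =
    (4 * a ^ 3 + 4 * a ^ 2 + 6 * a + 1) • Submodule.Quotient.mk ![1, 0, 0, 0] := by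
  rw [quotient_mk_eq_smul_mk_iff]
  convert relation_e₂_mem a using 1
  ext i
  fin_cases i <;> simp

lemma mk_e₃ (a : R) : (Submodule.Quotient.mk ![0, 0, 1, 0] : (Fin 4 → R) ⧸ evenLattice a) =
    (4 * a ^ 4 + 4 * a ^ 2 - 4 * a) • Submodule.Quotient.mk ![1, 0, 0, 0] := by
  rw [quotient_mk_eq_smul_mk_iff]
  convert relation_e₃_mem a using 1
  ext i
  fin_cases i <;> simp

lemma mk_e₄ (a : R) : (Submodule.Quotient.mk ![0, 0, 0, 1] : (Fin 4 → R) ⧸ evenLattice a) =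
    (4 * a ^ 4 + 4 * a ^ 2 - 2 * a) • Submodule.Quotient.mk ![1, 0, 0, 0] := by
  rw [quotient_mk_eq_smul_mk_iff]
  convert relation_e₄_mem a using 1
  ext i
  fin_cases i <;> simp

lemma span_mk_e₁_eq_top (a : R) :
    span R {(Submodule.Quotient.mk ![1, 0, 0, 0] : (Fin 4 → R) ⧸ evenLattice a)} = ⊤ := by
  refine span_singleton_eq_top_of_surjective (mkQ_surjective _) (Pi.basisFun R (Fin 4)).span_eq ?_
  have basis_eq : ⇑(Pi.basisFun R (Fin 4)) =
      ![![1, 0, 0, 0], ![0, 1, 0, 0], ![0, 0, 1, 0], ![0, 0, 0, 1]] := by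
    ext i j
    fin_cases i <;> fin_cases j <;> simp
  rw [basis_eq, Set.forall_mem_range]
  intro i
  fin_cases i
  · exact mem_span_singleton_self _
  · exact mem_span_singleton.2 ⟨_, (mk_e₂ a).symm⟩
  · exact mem_span_singleton.2 ⟨_, (mk_e₃ a).symm⟩
  · exact mem_span_singleton.2 ⟨_, (mk_e₄ a).symm⟩

end evenLattice

theorem quotient_cyclic_even_general (a : R) :
    (![4 * a ^ 3 + 4 * a ^ 2 + 6 * a + 1, -1, 0, 0] ∈ evenLattice a) ∧
    (![4 * a ^ 4 + 4 * a ^ 2 - 4 * a, 0, -1, 0] ∈ evenLattice a) ∧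
    (![4 * a ^ 4 + 4 * a ^ 2 - 2 * a, 0, 0, -1] ∈ evenLattice a) ∧
    ((Submodule.Quotient.mk ![0, 1, 0, 0] : (Fin 4 → R) ⧸ evenLattice a) =
      (4 * a ^ 3 + 4 * a ^ 2 + 6 * a + 1) • Submodule.Quotient.mk ![1, 0, 0, 0]) ∧
    ((Submodule.Quotient.mk ![0, 0, 1, 0] : (Fin 4 → R) ⧸ evenLattice a) =
      (4 * a ^ 4 + 4 * a ^ 2 - 4 * a) • Submodule.Quotient.mk ![1, 0, 0, 0]) ∧
    ((Submodule.Quotient.mk ![0, 0, 0, 1] : (Fin 4 → R) ⧸ evenLattice a) =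
      (4 * a ^ 4 + 4 * a ^ 2 - 2 * a) • Submodule.Quotient.mk ![1, 0, 0, 0]) ∧
    (∀ y : (Fin 4 → R) ⧸ evenLattice a, ∃ m : R, y = m • Submodule.Quotient.mk ![1, 0, 0, 0]) :=
  ⟨evenLattice.relation_e₂_mem a, evenLattice.relation_e₃_mem a,
    evenLattice.relation_e₄_mem a, evenLattice.mk_e₂ a, evenLattice.mk_e₃ a, evenLattice.mk_e₄ a,
    fun y ↦ (((span_singleton_eq_top_iff R _).1 (evenLattice.span_mk_e₁_eq_top a) y).imp
      fun _ ↦ Eq.symm)⟩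

end CommRing

/-- For `a ≥ 1` and `L` the span of `v₁, v₂, v₃, v₄` (even case), the three vectors
`(4a³+4a²+6a+1, -1, 0, 0)`, `(4a⁴+4a²-4a, 0, -1, 0)`, `(4a⁴+4a²-2a, 0, 0, -1)` lie
in `L`; hence in `ℤ⁴/L` the classes of `e₂, e₃, e₄` are the indicated multiples of
the class of `e₁`, and `ℤ⁴/L` is cyclic generated by the class of `e₁`. -/
theorem quotient_cyclic_even (a : ℤ) (ha : 1 ≤ a)
    (v₁ v₂ v₃ v₄ : Fin 4 → ℤ)
    (hv₁ : v₁ = ![-a - 1, a + 1, a, -a + 1])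
    (hv₂ : v₂ = ![a - 1, a + 1, a + 1, -a])
    (hv₃ : v₃ = ![-a - 1, -a + 1, a + 1, -a])
    (hv₄ : v₄ = ![-a, -a, a, a + 1])
    (L : Submodule ℤ (Fin 4 → ℤ))
    (hL : L = Submodule.span ℤ {v₁, v₂, v₃, v₄}) :
    (![4 * a ^ 3 + 4 * a ^ 2 + 6 * a + 1, -1, 0, 0] ∈ L) ∧
    (![4 * a ^ 4 + 4 * a ^ 2 - 4 * a, 0, -1, 0] ∈ L) ∧
    (![4 * a ^ 4 + 4 * a ^ 2 - 2 * a, 0, 0, -1] ∈ L) ∧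
    ((Submodule.Quotient.mk (![0, 1, 0, 0] : Fin 4 → ℤ) : (Fin 4 → ℤ) ⧸ L) =
      (4 * a ^ 3 + 4 * a ^ 2 + 6 * a + 1) • Submodule.Quotient.mk ![1, 0, 0, 0]) ∧
    ((Submodule.Quotient.mk (![0, 0, 1, 0] : Fin 4 → ℤ) : (Fin 4 → ℤ) ⧸ L) =
      (4 * a ^ 4 + 4 * a ^ 2 - 4 * a) • Submodule.Quotient.mk ![1, 0, 0, 0]) ∧
    ((Submodule.Quotient.mk (![0, 0, 0, 1] : Fin 4 → ℤ) : (Fin 4 → ℤ) ⧸ L) =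
      (4 * a ^ 4 + 4 * a ^ 2 - 2 * a) • Submodule.Quotient.mk ![1, 0, 0, 0]) ∧
    (∀ y : (Fin 4 → ℤ) ⧸ L, ∃ m : ℤ,
      y = m • Submodule.Quotient.mk ![1, 0, 0, 0]) := by
  subst hv₁ hv₂ hv₃ hv₄ hL
  exact quotient_cyclic_even_general a
end

section
/- Let a ≥ 2 be an integer and let L ⊆ ℤ⁴ be the ℤ-span of v₁ = (-a+1, a+1, -a+1, a), v₂ = (a+1, a+1, -a+2, a-1), v₃ = (-a-1, a-1, a-1, -a), v₄ = (-a, a, a, a-1). Then the vectors (4a³-4a²+6a-1, -1, 0, 0), (4a⁴-8a³+8a²-8a, 0, -1, 0), and (4a⁴-8a³+8a²-6a, 0, 0, -1) all lie in L; consequently, in the quotient group ℤ⁴/L one has e₂ = (4a³-4a²+6a-1)·e₁, e₃ = (4a⁴-8a³+8a²-8a)·e₁, e₄ = (4a⁴-8a³+8a²-6a)·e₁, so ℤ⁴/L is cyclic generated by the class of e₁. -/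
/-!
Write `e₁, …, e₄` for the classes of the standard basis. The differences `v₂ - v₁`, `v₄ - v₃` and
the sum `v₁ + v₃` are simple enough to eliminate `e₄` and then `e₂`, leaving two relations between
`e₁` and `e₃` in which `e₃` has coefficients `2a² - 2a + 1` and `4a²`. These generate the unit ideal
of `ℤ[a]`, since `(2a² - 2a + 1)(1 + 2a - 2a²) + 4a² (a - 1)² = 1`, so `e₃` is a multiple of `e₁`;
eliminating `e₃` instead shows that `8a⁴ - 8a³ + 12a² - 4a` annihilates `e₁`, which brings the
coefficient of `e₂` down to degree three.
-/

theorem quotient_mk_vec_four {R : Type*} [Ring R] (L : Submodule R (Fin 4 → R)) (x : Fin 4 → R) :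
    (Submodule.Quotient.mk x : (Fin 4 → R) ⧸ L) =
      x 0 • Submodule.Quotient.mk ![1, 0, 0, 0] + x 1 • Submodule.Quotient.mk ![0, 1, 0, 0] +
        x 2 • Submodule.Quotient.mk ![0, 0, 1, 0] + x 3 • Submodule.Quotient.mk ![0, 0, 0, 1] := by
  simp only [← Submodule.Quotient.mk_smul, ← Submodule.Quotient.mk_add]
  congr 1
  ext i
  fin_cases i <;> simp

section Relations

variable {R M : Type*} [CommRing R] [AddCommGroup M] [Module R M]

/-- The four relations that `v₁, v₂, v₃, v₄` impose on the standard basis, for elements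
`e₁, e₂, e₃, e₄` of an arbitrary module: `vᵢ` is the coefficient vector of `relᵢ`. -/
structure OddRelations (a : R) (e₁ e₂ e₃ e₄ : M) : Prop where
  rel₁ : (-a + 1) • e₁ + (a + 1) • e₂ + (-a + 1) • e₃ + a • e₄ = 0
  rel₂ : (a + 1) • e₁ + (a + 1) • e₂ + (-a + 2) • e₃ + (a - 1) • e₄ = 0
  rel₃ : (-a - 1) • e₁ + (a - 1) • e₂ + (a - 1) • e₃ + (-a) • e₄ = 0
  rel₄ : (-a) • e₁ + a • e₂ + a • e₃ + (a - 1) • e₄ = 0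

namespace OddRelations

variable {a : R} {e₁ e₂ e₃ e₄ : M}

theorem e₄_eq_smul_add (h : OddRelations a e₁ e₂ e₃ e₄) : e₄ = (2 * a) • e₁ + e₃ := by
  linear_combination (norm := module) h.rel₁ - h.rel₂

theorem e₂_eq_neg_smul_sub_smul (h : OddRelations a e₁ e₂ e₃ e₄) :
    e₂ = -((4 * a ^ 2 - 2 * a + 1) • e₁) - (2 * a) • e₃ := by
  linear_combination (norm := module) h.rel₄ - h.rel₃ - (2 * a - 1) • h.e₄_eq_smul_add

theorem two_mul_smul_e₂ (h : OddRelations a e₁ e₂ e₃ e₄) : (2 * a) • e₂ = (2 * a) • e₁ := by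
  linear_combination (norm := module) h.rel₁ + h.rel₃

theorem two_mul_sq_sub_two_mul_add_one_smul_e₃ (h : OddRelations a e₁ e₂ e₃ e₄) :
    (2 * a ^ 2 - 2 * a + 1) • e₃ = -((4 * a ^ 3 - 4 * a ^ 2 + 4 * a) • e₁) := by
  linear_combination (norm := module)
    (a - 1) • h.e₄_eq_smul_add + a • h.e₂_eq_neg_smul_sub_smul - h.rel₄

theorem four_mul_sq_smul_e₃ (h : OddRelations a e₁ e₂ e₃ e₄) :
    (4 * a ^ 2) • e₃ = -((8 * a ^ 3 - 4 * a ^ 2 + 4 * a) • e₁) := by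
  linear_combination (norm := module) (2 * a) • h.e₂_eq_neg_smul_sub_smul - h.two_mul_smul_e₂

theorem smul_e₁_eq_zero (h : OddRelations a e₁ e₂ e₃ e₄) :
    (8 * a ^ 4 - 8 * a ^ 3 + 12 * a ^ 2 - 4 * a) • e₁ = 0 := by
  linear_combination (norm := module)
    (4 * a ^ 2) • h.two_mul_sq_sub_two_mul_add_one_smul_e₃ -
      (2 * a ^ 2 - 2 * a + 1) • h.four_mul_sq_smul_e₃

theorem e₃_eq_smul_e₁ (h : OddRelations a e₁ e₂ e₃ e₄) :
    e₃ = (4 * a ^ 4 - 8 * a ^ 3 + 8 * a ^ 2 - 8 * a) • e₁ := by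
  linear_combination (norm := module)
    (1 + 2 * a - 2 * a ^ 2) • h.two_mul_sq_sub_two_mul_add_one_smul_e₃ +
      (a - 1) ^ 2 • h.four_mul_sq_smul_e₃

theorem e₂_eq_smul_e₁ (h : OddRelations a e₁ e₂ e₃ e₄) :
    e₂ = (4 * a ^ 3 - 4 * a ^ 2 + 6 * a - 1) • e₁ := by
  linear_combination (norm := module)
    h.e₂_eq_neg_smul_sub_smul - (2 * a) • h.e₃_eq_smul_e₁ - (a - 1) • h.smul_e₁_eq_zero

theorem e₄_eq_smul_e₁ (h : OddRelations a e₁ e₂ e₃ e₄) :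
    e₄ = (4 * a ^ 4 - 8 * a ^ 3 + 8 * a ^ 2 - 6 * a) • e₁ := by
  linear_combination (norm := module) h.e₄_eq_smul_add + h.e₃_eq_smul_e₁

end OddRelations

/-- The lattice `L` spanned by `v₁, v₂, v₃, v₄`, over an arbitrary commutative ring. -/
def oddLattice (a : R) : Submodule R (Fin 4 → R) :=
  Submodule.span R {![-a + 1, a + 1, -a + 1, a], ![a + 1, a + 1, -a + 2, a - 1],
    ![-a - 1, a - 1, a - 1, -a], ![-a, a, a, a - 1]}

theorem oddRelations_mk (a : R) :
    OddRelations a (Submodule.Quotient.mk ![1, 0, 0, 0] : (Fin 4 → R) ⧸ oddLattice a)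
      (Submodule.Quotient.mk ![0, 1, 0, 0]) (Submodule.Quotient.mk ![0, 0, 1, 0])
      (Submodule.Quotient.mk ![0, 0, 0, 1]) := by
  constructor <;>
  · refine (quotient_mk_vec_four _ ![_, _, _, _]).symm.trans ?_
    exact (Submodule.Quotient.mk_eq_zero _).2 (Submodule.subset_span (by simp))

theorem quotient_cyclic_odd_general (a : R) :
    (![4 * a ^ 3 - 4 * a ^ 2 + 6 * a - 1, -1, 0, 0] ∈ oddLattice a) ∧
    (![4 * a ^ 4 - 8 * a ^ 3 + 8 * a ^ 2 - 8 * a, 0, -1, 0] ∈ oddLattice a) ∧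
    (![4 * a ^ 4 - 8 * a ^ 3 + 8 * a ^ 2 - 6 * a, 0, 0, -1] ∈ oddLattice a) ∧
    ((Submodule.Quotient.mk (![0, 1, 0, 0] : Fin 4 → R) : (Fin 4 → R) ⧸ oddLattice a) =
      (4 * a ^ 3 - 4 * a ^ 2 + 6 * a - 1) • Submodule.Quotient.mk ![1, 0, 0, 0]) ∧
    ((Submodule.Quotient.mk (![0, 0, 1, 0] : Fin 4 → R) : (Fin 4 → R) ⧸ oddLattice a) =
      (4 * a ^ 4 - 8 * a ^ 3 + 8 * a ^ 2 - 8 * a) • Submodule.Quotient.mk ![1, 0, 0, 0]) ∧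
    ((Submodule.Quotient.mk (![0, 0, 0, 1] : Fin 4 → R) : (Fin 4 → R) ⧸ oddLattice a) =
      (4 * a ^ 4 - 8 * a ^ 3 + 8 * a ^ 2 - 6 * a) • Submodule.Quotient.mk ![1, 0, 0, 0]) ∧
    (∀ y : (Fin 4 → R) ⧸ oddLattice a, ∃ m : R,
      y = m • Submodule.Quotient.mk ![1, 0, 0, 0]) := by
  have h := oddRelations_mk a
  refine ⟨?_, ?_, ?_, h.e₂_eq_smul_e₁, h.e₃_eq_smul_e₁, h.e₄_eq_smul_e₁, fun y => ?_⟩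
  · rw [← Submodule.Quotient.mk_eq_zero, quotient_mk_vec_four, h.e₂_eq_smul_e₁]
    simp
  · rw [← Submodule.Quotient.mk_eq_zero, quotient_mk_vec_four, h.e₃_eq_smul_e₁]
    simp
  · rw [← Submodule.Quotient.mk_eq_zero, quotient_mk_vec_four, h.e₄_eq_smul_e₁]
    simp
  · obtain ⟨x, rfl⟩ := Submodule.Quotient.mk_surjective _ y
    rw [quotient_mk_vec_four, h.e₂_eq_smul_e₁, h.e₃_eq_smul_e₁, h.e₄_eq_smul_e₁]
    simp only [smul_smul, ← add_smul]
    exact ⟨_, rfl⟩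

end Relations

/-- For `a ≥ 2` and `L` the span of `v₁, v₂, v₃, v₄` (odd case), the three vectors
`(4a³-4a²+6a-1, -1, 0, 0)`, `(4a⁴-8a³+8a²-8a, 0, -1, 0)`, `(4a⁴-8a³+8a²-6a, 0, 0, -1)`
lie in `L`; hence in `ℤ⁴/L` the classes of `e₂, e₃, e₄` are the indicated multiples of
the class of `e₁`, and `ℤ⁴/L` is cyclic generated by the class of `e₁`. -/
theorem quotient_cyclic_odd (a : ℤ) (ha : 2 ≤ a)
    (v₁ v₂ v₃ v₄ : Fin 4 → ℤ)
    (hv₁ : v₁ = ![-a + 1, a + 1, -a + 1, a])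
    (hv₂ : v₂ = ![a + 1, a + 1, -a + 2, a - 1])
    (hv₃ : v₃ = ![-a - 1, a - 1, a - 1, -a])
    (hv₄ : v₄ = ![-a, a, a, a - 1])
    (L : Submodule ℤ (Fin 4 → ℤ))
    (hL : L = Submodule.span ℤ {v₁, v₂, v₃, v₄}) :
    (![4 * a ^ 3 - 4 * a ^ 2 + 6 * a - 1, -1, 0, 0] ∈ L) ∧
    (![4 * a ^ 4 - 8 * a ^ 3 + 8 * a ^ 2 - 8 * a, 0, -1, 0] ∈ L) ∧
    (![4 * a ^ 4 - 8 * a ^ 3 + 8 * a ^ 2 - 6 * a, 0, 0, -1] ∈ L) ∧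
    ((Submodule.Quotient.mk (![0, 1, 0, 0] : Fin 4 → ℤ) : (Fin 4 → ℤ) ⧸ L) =
      (4 * a ^ 3 - 4 * a ^ 2 + 6 * a - 1) • Submodule.Quotient.mk ![1, 0, 0, 0]) ∧
    ((Submodule.Quotient.mk (![0, 0, 1, 0] : Fin 4 → ℤ) : (Fin 4 → ℤ) ⧸ L) =
      (4 * a ^ 4 - 8 * a ^ 3 + 8 * a ^ 2 - 8 * a) • Submodule.Quotient.mk ![1, 0, 0, 0]) ∧
    ((Submodule.Quotient.mk (![0, 0, 0, 1] : Fin 4 → ℤ) : (Fin 4 → ℤ) ⧸ L) =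
      (4 * a ^ 4 - 8 * a ^ 3 + 8 * a ^ 2 - 6 * a) • Submodule.Quotient.mk ![1, 0, 0, 0]) ∧
    (∀ y : (Fin 4 → ℤ) ⧸ L, ∃ m : ℤ,
      y = m • Submodule.Quotient.mk ![1, 0, 0, 0]) := by
  subst hv₁ hv₂ hv₃ hv₄ hL
  exact quotient_cyclic_odd_general a
end

section
/- Let k ≥ 5 be odd, a = (k+1)/2, and let L ⊆ ℤ⁴ be the ℤ-span of v₁ = (-a+1, a+1, -a+1, a), v₂ = (a+1, a+1, -a+2, a-1), v₃ = (-a-1, a-1, a-1, -a), v₄ = (-a, a, a, a-1). Then for every x ∈ ℤ⁴ there exists w ∈ L such that every coordinate of x - w has absolute value at most a + 1. -/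
/-!
Call `v` sign-matched to `x` if `v` lies in the interior of an orthant containing `x`. If moreover
the coordinates of `v` are bounded by `b`, then passing from `x` to `x - v` brings every coordinate
of absolute value exceeding `b` strictly closer to `0` and keeps every other one bounded by `b`.
So if a lattice has a vector bounded by `b` inside every open orthant, finitely many such steps
move any point into the box of radius `b`. Up to sign `ℤ⁴` has eight orthants, and for `a ≥ 3` the
lattice `L` has a vector bounded by `a + 1` in each of them: `±v₁, …, ±v₄` and the four
combinations `v₂ + v₄ - v₁`, `v₂ + v₃ - v₄`, `v₄ - v₁ - v₃`, `v₂ + v₃ - v₁`.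
-/

section SignMatchedReduction

variable {ι σ : Type*}

/-- The set `S` of integer vectors has, in the interior of each orthant, an element all of whose
coordinates have absolute value at most `b`. An orthant is encoded by the signs `s i` of its
coordinates. -/
def MeetsOrthantBoxes (S : Set (ι → ℤ)) (b : ℤ) : Prop :=
  ∀ s : ι → ℤˣ, ∃ v ∈ S, ∀ i, (s i : ℤ) * v i ∈ Set.Ioc 0 b

theorem exists_units_mul_eq_abs (n : ℤ) : ∃ ε : ℤˣ, (ε : ℤ) * n = |n| := by
  rcases abs_choice n with h | h
  · exact ⟨1, by simp [h]⟩
  · exact ⟨-1, by simp [h]⟩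

theorem abs_sub_le_max_of_units_mul_mem_Ioc {x v b : ℤ} {ε : ℤˣ} (hx : (ε : ℤ) * x = |x|)
    (hv : (ε : ℤ) * v ∈ Set.Ioc 0 b) : |x - v| ≤ max b (|x| - 1) := by
  have hε : |(ε : ℤ)| = 1 := Int.isUnit_iff_abs_eq.mp ε.isUnit
  have hx₀ : 0 ≤ |x| := abs_nonneg x
  obtain ⟨hv₀, hvb⟩ := hv
  calc |x - v| = |(ε : ℤ) * (x - v)| := by rw [abs_mul, hε, one_mul]
    _ = |(|x| - ε * v)| := by rw [mul_sub, hx]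
    _ ≤ max b (|x| - 1) := abs_le.mpr ⟨by omega, by omega⟩

/-- Since `S = -S`, only the orthants on one side of a coordinate hyperplane need checking. -/
theorem meetsOrthantBoxes_of_apply_eq_one [SetLike σ (ι → ℤ)] [NegMemClass σ (ι → ℤ)] {S : σ}
    {b : ℤ} (i₀ : ι)
    (h : ∀ s : ι → ℤˣ, s i₀ = 1 → ∃ v ∈ S, ∀ i, (s i : ℤ) * v i ∈ Set.Ioc 0 b) :
    MeetsOrthantBoxes (S : Set (ι → ℤ)) b := by
  intro s
  rcases Int.units_eq_one_or (s i₀) with hs | hs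
  · exact h s hs
  · obtain ⟨v, hv, hsv⟩ := h (-s) (by simp [hs])
    exact ⟨-v, neg_mem hv, by simpa using hsv⟩

namespace MeetsOrthantBoxes

theorem exists_abs_sub_le_max {S : Set (ι → ℤ)} {b : ℤ} (hS : MeetsOrthantBoxes S b)
    (x : ι → ℤ) : ∃ v ∈ S, ∀ i, |x i - v i| ≤ max b (|x i| - 1) := by
  choose s hs using fun i => exists_units_mul_eq_abs (x i)
  obtain ⟨v, hv, hsv⟩ := hS s
  exact ⟨v, hv, fun i => abs_sub_le_max_of_units_mul_mem_Ioc (hs i) (hsv i)⟩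

variable [SetLike σ (ι → ℤ)] [AddSubmonoidClass σ (ι → ℤ)] {L : σ} {b : ℤ}

theorem exists_abs_sub_le_of_abs_le_add (hL : MeetsOrthantBoxes (L : Set (ι → ℤ)) b) (n : ℕ)
    (x : ι → ℤ) (hx : ∀ i, |x i| ≤ b + n) : ∃ w ∈ L, ∀ i, |x i - w i| ≤ b := by
  induction n generalizing x with
  | zero => exact ⟨0, zero_mem L, by simpa using hx⟩
  | succ n ih =>
    obtain ⟨v, hv, hxv⟩ := hL.exists_abs_sub_le_max x
    have hxv_le (i : ι) : |(x - v) i| ≤ b + n := by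
      have hxi := hx i
      push_cast at hxi
      exact (hxv i).trans (max_le (by omega) (by omega))
    obtain ⟨w, hw, hxvw⟩ := ih (x - v) hxv_le
    exact ⟨v + w, add_mem hv hw, fun i => by simpa [sub_sub] using hxvw i⟩

theorem exists_abs_sub_le [Finite ι] (hL : MeetsOrthantBoxes (L : Set (ι → ℤ)) b) (x : ι → ℤ) :
    ∃ w ∈ L, ∀ i, |x i - w i| ≤ b := by
  obtain ⟨M, hM⟩ := Finite.exists_le fun i => |x i|
  refine hL.exists_abs_sub_le_of_abs_le_add (M - b).toNat x fun i => ?_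
  have hxi : |x i| ≤ M := hM i
  omega

end MeetsOrthantBoxes

end SignMatchedReduction

theorem meetsOrthantBoxes_of_generators_mem {σ : Type*} [SetLike σ (Fin 4 → ℤ)]
    [AddSubgroupClass σ (Fin 4 → ℤ)] {L : σ} {a : ℤ} (ha : 3 ≤ a)
    (h₁ : ![-a + 1, a + 1, -a + 1, a] ∈ L) (h₂ : ![a + 1, a + 1, -a + 2, a - 1] ∈ L)
    (h₃ : ![-a - 1, a - 1, a - 1, -a] ∈ L) (h₄ : ![-a, a, a, a - 1] ∈ L) :
    MeetsOrthantBoxes (L : Set (Fin 4 → ℤ)) (a + 1) := by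
  have h₅ : ![a, a, a + 1, a - 2] ∈ L := by
    convert sub_mem (add_mem h₂ h₄) h₁ using 1
    simp; omega
  have h₆ : ![a, a, -a + 1, -a] ∈ L := by
    convert sub_mem (add_mem h₂ h₃) h₄ using 1
    simp; omega
  have h₇ : ![a, -a, a, a - 1] ∈ L := by
    convert sub_mem (sub_mem h₄ h₁) h₃ using 1
    simp; omega
  have h₈ : ![a - 1, a - 1, a, -a - 1] ∈ L := by
    convert sub_mem (add_mem h₂ h₃) h₁ using 1
    simp; omega
  refine meetsOrthantBoxes_of_apply_eq_one 0 fun s hs₀ => ?_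
  rcases Int.units_eq_one_or (s 1) with hs₁ | hs₁ <;>
    rcases Int.units_eq_one_or (s 2) with hs₂ | hs₂ <;>
    rcases Int.units_eq_one_or (s 3) with hs₃ | hs₃ <;>
    simp only [Fin.forall_fin_succ, Fin.reduceSucc, IsEmpty.forall_iff, and_true,
      hs₀, hs₁, hs₂, hs₃]
  · exact ⟨_, h₅, by simp; omega⟩
  · exact ⟨_, h₈, by simp; omega⟩
  · exact ⟨_, h₂, by simp; omega⟩
  · exact ⟨_, h₆, by simp; omega⟩
  · exact ⟨_, h₇, by simp; omega⟩
  · exact ⟨_, neg_mem h₁, by simp; omega⟩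
  · exact ⟨_, neg_mem h₃, by simp; omega⟩
  · exact ⟨_, neg_mem h₄, by simp; omega⟩

/-- For odd `k ≥ 5`, `a = (k+1)/2`, every point of `ℤ⁴` can be reduced modulo the
lattice `L` to a point all of whose coordinates have absolute value at most `a + 1`. -/
theorem lattice_reduce_box_odd (k a : ℤ) (hk : 5 ≤ k) (hko : Odd k) (ha : a = (k + 1) / 2)
    (v₁ v₂ v₃ v₄ : Fin 4 → ℤ)
    (hv₁ : v₁ = ![-a + 1, a + 1, -a + 1, a])
    (hv₂ : v₂ = ![a + 1, a + 1, -a + 2, a - 1])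
    (hv₃ : v₃ = ![-a - 1, a - 1, a - 1, -a])
    (hv₄ : v₄ = ![-a, a, a, a - 1])
    (L : Submodule ℤ (Fin 4 → ℤ))
    (hL : L = Submodule.span ℤ {v₁, v₂, v₃, v₄}) :
    ∀ x : Fin 4 → ℤ, ∃ w ∈ L, ∀ i : Fin 4, |x i - w i| ≤ a + 1 := by
  have ha₃ : 3 ≤ a := by omega
  have hvL : {v₁, v₂, v₃, v₄} ⊆ (L : Set (Fin 4 → ℤ)) := hL ▸ Submodule.subset_span
  have hbox : MeetsOrthantBoxes (L : Set (Fin 4 → ℤ)) (a + 1) :=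
    meetsOrthantBoxes_of_generators_mem ha₃ (hv₁ ▸ hvL (by simp)) (hv₂ ▸ hvL (by simp))
      (hv₃ ▸ hvL (by simp)) (hv₄ ▸ hvL (by simp))
  exact hbox.exists_abs_sub_le
end

section
/- Let k ≥ 5 be odd, a = (k+1)/2, and let L ⊆ ℤ⁴ be the ℤ-span of v₁ = (-a+1, a+1, -a+1, a), v₂ = (a+1, a+1, -a+2, a-1), v₃ = (-a-1, a-1, a-1, -a), v₄ = (-a, a, a, a-1). Then for every x = (-r, -s, -t, u) ∈ ℤ⁴ with 0 ≤ r ≤ a+1, 0 ≤ s ≤ a+1, 0 ≤ t ≤ a+1, 0 ≤ u ≤ a+1 (the orthant of v₈ = v₁ - v₂ - v₃ = (-a+1, -a+1, -a, a+1), with coordinates bounded by a+1), there exists w ∈ L with ‖x - w‖₁ ≤ k, where ‖y‖₁ = |y₁| + |y₂| + |y₃| + |y₄|. -/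
/-!
Write `P = v₈`, `Q = v₄ - v₂ - v₃`, `A = -v₂ - v₃`, `B = v₁ - v₂`; these form a basis of `L`, and
exchanging the first two coordinates fixes `P` and `Q` and swaps `A` with `B`. A point between `0`
and `P` has distances to `0` and `P` adding up to `‖P‖₁ = 4a - 1 = 2k + 1`, so one of them is at
most `k`. A point `(-r, -s, -t, u)` outside that box has `r ≥ a`, `s ≥ a` or `t = a + 1`; the few
that are then far from `P` are close to another combination of `P, Q, A, B` with small
coefficients.
-/

/-- The lattice `L_k` of the paper, parametrised by `a`, where `k = 2a - 1`. -/
def coveringLattice (a : ℤ) : Submodule ℤ (Fin 4 → ℤ) :=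
  Submodule.span ℤ {![-a + 1, a + 1, -a + 1, a], ![a + 1, a + 1, -a + 2, a - 1],
    ![-a - 1, a - 1, a - 1, -a], ![-a, a, a, a - 1]}

/-- The point `(-r, -s, -t, u)` lies within `l¹`-distance `k = 2a - 1` of the lattice. The signs
are those of `v₈`, so that its orthant becomes `0 ≤ r, s, t, u`. -/
def IsCovered (a r s t u : ℤ) : Prop :=
  ∃ w ∈ coveringLattice a, |-r - w 0| + |-s - w 1| + |-t - w 2| + |u - w 3| ≤ 2 * a - 1

theorem mem_coveringLattice_iff {a : ℤ} {w : Fin 4 → ℤ} :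
    w ∈ coveringLattice a ↔ ∃ i j m n : ℤ,
      w = ![-(i * (a - 1) + j * a + 2 * a * n), -(i * (a - 1) + j * a + 2 * a * m),
        -(i * a + j * (1 - a) + m + n), i * (a + 1) + j * a + m + n] := by
  simp only [coveringLattice, Submodule.mem_span_insert, Submodule.mem_span_singleton,
    exists_exists_eq_and]
  constructor
  · rintro ⟨c₁, _, ⟨c₂, _, ⟨c₃, c₄, rfl⟩, rfl⟩, rfl⟩
    refine ⟨c₁ + c₂ - c₃, c₄, -c₁ - c₂ - c₄, c₃ - c₂, ?_⟩
    ext l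
    fin_cases l <;> simp <;> ring
  · rintro ⟨i, j, m, n, rfl⟩
    refine ⟨i + n, _, ⟨-i - j - m - n, _, ⟨-i - j - m, j, rfl⟩, rfl⟩, ?_⟩
    ext l
    fin_cases l <;> simp <;> ring

namespace IsCovered

variable {a r s t u : ℤ}

/-- The distance is measured to `i • P + j • Q + m • A + n • B`, where, up to the signs of the
orthant, `P = (a - 1, a - 1, a, a + 1)`, `Q = (a, a, 1 - a, a)`, `A = (0, 2a, 1, 1)` and
`B = (2a, 0, 1, 1)`. It is written with `Int.natAbs` because `omega` understands it. -/
theorem of_combination (i j m n : ℤ)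
    (h : ((r - (i * (a - 1) + j * a + 2 * a * n)).natAbs : ℤ) +
      (s - (i * (a - 1) + j * a + 2 * a * m)).natAbs +
      (t - (i * a + j * (1 - a) + m + n)).natAbs +
      (u - (i * (a + 1) + j * a + m + n)).natAbs ≤ 2 * a - 1) :
    IsCovered a r s t u := by
  refine ⟨_, mem_coveringLattice_iff.2 ⟨i, j, m, n, rfl⟩, ?_⟩
  simp only [Int.natCast_natAbs] at h
  simpa only [Matrix.cons_val, ← neg_sub', abs_neg] using h

theorem swap (h : IsCovered a r s t u) : IsCovered a s r t u := by
  obtain ⟨w, hw, hdist⟩ := h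
  obtain ⟨i, j, m, n, rfl⟩ := mem_coveringLattice_iff.1 hw
  refine ⟨_, mem_coveringLattice_iff.2 ⟨i, j, n, m, rfl⟩, ?_⟩
  simpa only [Matrix.cons_val, add_comm |-s - _|, add_right_comm _ m n] using hdist

theorem of_le_v₈ (hr : 0 ≤ r) (hra : r < a) (hs : 0 ≤ s) (hsa : s < a) (ht : 0 ≤ t) (hta : t ≤ a)
    (hu : 0 ≤ u) (hua : u ≤ a + 1) : IsCovered a r s t u := by
  rcases lt_or_ge (r + s + t + u) (2 * a) with near_zero | near_P
  · exact of_combination 0 0 0 0 (by omega)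
  · exact of_combination 1 0 0 0 (by omega)

theorem third_add_one_of_lt_of_lt (ha : 2 ≤ a) (hr : 0 ≤ r) (hra : r < a) (hs : 0 ≤ s)
    (hsa : s < a) (hu : 0 ≤ u) (hua : u ≤ a + 1) : IsCovered a r s (a + 1) u := by
  rcases lt_or_ge a (r + s + u) with near_P | far_P
  · exact of_combination 1 0 0 0 (by omega)
  rcases hu.eq_or_lt with rfl | hu
  · rcases lt_or_ge (r + s) (a - 1) with near_zero | far_zero
    · exact of_combination 0 0 0 0 (by omega)
    · exact of_combination 0 (-1) 1 1 (by omega)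
  · exact of_combination 1 (-1) 0 0 (by omega)

theorem third_add_one_of_lt_of_le (ha : 2 ≤ a) (hr : 0 ≤ r) (hra : r < a) (has : a ≤ s)
    (hsa : s ≤ a + 1) (hu : 0 ≤ u) (hua : u ≤ a + 1) : IsCovered a r s (a + 1) u := by
  rcases le_or_gt 2 u with two_le_u | u_lt_two
  · rcases lt_or_ge (s + 2 - a) (r + u) with near_P | far_P
    · exact of_combination 1 0 0 0 (by omega)
    · exact of_combination 1 (-1) 1 0 (by omega)
  · rcases lt_or_ge (r + a + 1) (s + u) with hlt | hge
    · exact of_combination 1 (-1) 1 0 (by omega)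
    · exact of_combination 0 (-1) 1 1 (by omega)

theorem third_add_one_of_le_of_le (ha : 2 ≤ a) (har : a ≤ r) (hra : r ≤ a + 1) (has : a ≤ s)
    (hsa : s ≤ a + 1) (hu : 0 ≤ u) (hua : u ≤ a + 1) : IsCovered a r s (a + 1) u := by
  rcases le_or_gt (r + s + 5) (3 * a + u) with near_P | far_P
  · exact of_combination 1 0 0 0 (by omega)
  rcases le_or_gt (r + s + u) (3 * a + 1) with hle | hgt
  · exact of_combination 0 (-1) 1 1 (by omega)
  · exact of_combination 1 (-1) 1 1 (by omega)

theorem of_lt_of_le_of_pos (hr : 0 ≤ r) (hra : r < a) (has : a ≤ s) (hsa : s ≤ a + 1)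
    (ht : 0 < t) (hta : t ≤ a) (hu : 0 < u) (hua : u ≤ a + 1) : IsCovered a r s t u := by
  rcases lt_or_ge (s + 1) (r + t + u) with near_P | far_P
  · exact of_combination 1 0 0 0 (by omega)
  · exact of_combination 0 0 1 0 (by omega)

theorem third_zero_of_lt_of_le (ha : 2 ≤ a) (hr : 0 ≤ r) (hra : r < a) (has : a ≤ s)
    (hsa : s ≤ a + 1) (hu : 0 < u) (hua : u ≤ a + 1) : IsCovered a r s 0 u := by
  rcases lt_or_ge (r + u) s with near_A | far_A
  · exact of_combination 0 0 1 0 (by omega)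
  rcases hua.eq_or_lt with rfl | hua
  · rcases lt_or_ge s (r + a) with near_Q | far_Q
    · exact of_combination 0 1 0 0 (by omega)
    · exact of_combination 1 1 0 (-1) (by omega)
  · exact of_combination 0 1 0 0 (by omega)

theorem fourth_zero_of_lt_of_le (ha : 2 ≤ a) (hr : 0 ≤ r) (hra : r < a) (has : a ≤ s)
    (hsa : s ≤ a + 1) (ht : 0 < t) (hta : t ≤ a) : IsCovered a r s t 0 := by
  rcases lt_or_ge (r + t) s with near_A | far_A
  · exact of_combination 0 0 1 0 (by omega)
  · exact of_combination 0 (-1) 1 1 (by omega)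

theorem third_zero_fourth_zero (ha : 2 ≤ a) (hr : 0 ≤ r) (hra : r ≤ a + 1) (hs : 0 ≤ s)
    (hsa : s ≤ a + 1) : IsCovered a r s 0 0 := by
  rcases lt_or_ge (r + s) (2 * a) with near_zero | far_zero
  · exact of_combination 0 0 0 0 (by omega)
  · exact of_combination (-1) 0 1 1 (by omega)

theorem of_lt_of_le (ha : 2 ≤ a) (hr : 0 ≤ r) (hra : r < a) (has : a ≤ s) (hsa : s ≤ a + 1)
    (ht : 0 ≤ t) (hta : t ≤ a) (hu : 0 ≤ u) (hua : u ≤ a + 1) : IsCovered a r s t u := by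
  rcases ht.eq_or_lt with rfl | ht <;> rcases hu.eq_or_lt with rfl | hu
  · exact third_zero_fourth_zero ha hr (by omega) (by omega) hsa
  · exact third_zero_of_lt_of_le ha hr hra has hsa hu hua
  · exact fourth_zero_of_lt_of_le ha hr hra has hsa ht hta
  · exact of_lt_of_le_of_pos hr hra has hsa ht hta hu hua

theorem of_le_of_le (ha : 2 ≤ a) (har : a ≤ r) (hra : r ≤ a + 1) (has : a ≤ s) (hsa : s ≤ a + 1)
    (ht : 0 ≤ t) (hta : t ≤ a) (hu : 0 ≤ u) (hua : u ≤ a + 1) : IsCovered a r s t u := by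
  obtain ⟨j, hj⟩ : ∃ j, r + s = 2 * a + j := ⟨r + s - 2 * a, by ring⟩
  rcases lt_or_ge (j + 3) (t + u) with near_P | far_P
  · exact of_combination 1 0 0 0 (by omega)
  rcases le_or_gt (t + u) j with hsum | hsum
  · exact of_combination (-1) 0 1 1 (by omega)
  rcases le_or_gt (j + u) t with htu | htu
  · exact of_combination 0 (-1) 1 1 (by omega)
  rcases le_or_gt (j + t) u with hut | hut
  · rcases lt_or_ge (u + j + t) (2 * a + 1) with near_Q | far_Q
    · exact of_combination 0 1 0 0 (by omega)
    · exact of_combination 1 1 0 0 (by omega)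
  -- Since `|t - u| < j < t + u`, here `t + u = 2` forces `t = u = j = 1`, so `{r, s} = {a, a + 1}`.
  rcases eq_or_ne (t + u) 2 with htwo | hne
  · rcases lt_or_ge r s with hrs | hsr
    · exact of_combination 0 0 1 0 (by omega)
    · exact of_combination 0 0 0 1 (by omega)
  · exact of_combination 0 0 1 1 (by omega)

end IsCovered

theorem lattice_orthant_v₈_odd_general (a : ℤ) (ha : 2 ≤ a) (r s t u : ℤ)
    (hr : 0 ≤ r) (hra : r ≤ a + 1) (hs : 0 ≤ s) (hsa : s ≤ a + 1)
    (ht : 0 ≤ t) (hta : t ≤ a + 1) (hu : 0 ≤ u) (hua : u ≤ a + 1) : IsCovered a r s t u := by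
  rcases lt_or_ge r a with hr_lt | hr_ge <;> rcases lt_or_ge s a with hs_lt | hs_ge <;>
    rcases Int.le_add_one_iff.1 hta with hta | rfl
  · exact IsCovered.of_le_v₈ hr hr_lt hs hs_lt ht hta hu hua
  · exact IsCovered.third_add_one_of_lt_of_lt ha hr hr_lt hs hs_lt hu hua
  · exact IsCovered.of_lt_of_le ha hr hr_lt hs_ge hsa ht hta hu hua
  · exact IsCovered.third_add_one_of_lt_of_le ha hr hr_lt hs_ge hsa hu hua
  · exact (IsCovered.of_lt_of_le ha hs hs_lt hr_ge hra ht hta hu hua).swap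
  · exact (IsCovered.third_add_one_of_lt_of_le ha hs hs_lt hr_ge hra hu hua).swap
  · exact IsCovered.of_le_of_le ha hr_ge hra hs_ge hsa ht hta hu hua
  · exact IsCovered.third_add_one_of_le_of_le ha hr_ge hra hs_ge hsa hu hua

/-- Orthant of `v₈ = v₁ - v₂ - v₃`, `k ≡ 1 (mod 2)`: for odd `k ≥ 5`, `a = (k+1)/2`,
every point `x = (-r, -s, -t, u)` with `0 ≤ r, s, t, u ≤ a + 1` is within
`l¹`-distance `k` of the lattice `L`. -/
theorem lattice_orthant_v₈_odd (k a : ℤ) (hk : 5 ≤ k) (hko : Odd k) (ha : a = (k + 1) / 2)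
    (v₁ v₂ v₃ v₄ : Fin 4 → ℤ)
    (hv₁ : v₁ = ![-a + 1, a + 1, -a + 1, a])
    (hv₂ : v₂ = ![a + 1, a + 1, -a + 2, a - 1])
    (hv₃ : v₃ = ![-a - 1, a - 1, a - 1, -a])
    (hv₄ : v₄ = ![-a, a, a, a - 1])
    (v₈ : Fin 4 → ℤ) (hv₈ : v₈ = v₁ - v₂ - v₃)
    (hv₈' : v₈ = ![-a + 1, -a + 1, -a, a + 1])
    (L : Submodule ℤ (Fin 4 → ℤ))
    (hL : L = Submodule.span ℤ {v₁, v₂, v₃, v₄}) :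
    ∀ r s t u : ℤ, 0 ≤ r → r ≤ a + 1 → 0 ≤ s → s ≤ a + 1 →
      0 ≤ t → t ≤ a + 1 → 0 ≤ u → u ≤ a + 1 →
      ∀ x : Fin 4 → ℤ, x = ![-r, -s, -t, u] →
      ∃ w ∈ L, |x 0 - w 0| + |x 1 - w 1| + |x 2 - w 2| + |x 3 - w 3| ≤ k := by
  intro r s t u hr hra hs hsa ht hta hu hua x hx
  obtain rfl : k = 2 * a - 1 := by
    obtain ⟨m, rfl⟩ := hko
    omega
  subst hL hv₁ hv₂ hv₃ hv₄ hx
  exact lattice_orthant_v₈_odd_general a (by omega) r s t u hr hra hs hsa ht hta hu hua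
end
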